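/- Let α be an irrational vector in ℝ^d. If S ⊆ ℝ^d is a Riemann measurable bounded remainder set with respect to α, then S admits a Riemann integrable transfer function, i.e., there exists a bounded function g : 𝕋^d → ℝ whose set of discontinuity points has Lebesgue measure zero and which satisfies χ_S(x) − Leb(S) = g(x) − g(x − α) for almost every x ∈ 𝕋^d. -/

import Mathlib

/-!
Write `f = χ_S - Leb S`. The proof is a Gottschalk–Hedlund argument carried out on the set
`G = goodSet α S` of points none of whose translates by `ℤα + ℤ^d` lies on the boundary of `S`.
Since the boundary is null, `G` has full measure, it is invariant under `ℤα + ℤ^d`, and every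
Birkhoff sum of `f` is continuous at each point of `G`. Hence the almost everywhere bound on the
discrepancies holds at *every* point of `G` (`abs_disc_le`).

Let `coc q`, `q ∈ ℤ`, be the two-sided Birkhoff cocycle of `f`, so that
`coc (q + 1) x = f x + coc q (x + α)`. Both `h₁ = sup_q (-coc q)` and `h₂ = inf_q (-coc q)` are
finite on `G` and solve `h (x + α) = f x + h x` there; `h₁` is lower and `h₂` upper semicontinuous
on `G`. The difference `h₁ - h₂` is therefore lower semicontinuous on `G` and invariant under
`ℤα + ℤ^d`. As the orbits of this group are dense, `h₁ - h₂` is constant on `G`: it is at most its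
value at any other point. So `h₁` is also upper semicontinuous, hence continuous, on `G`
(`exists_transfer_on_goodSet`).

A bounded periodic function which is continuous on a periodic set of full measure extends, by
taking limits superior along the set, to a bounded periodic function on `ℝ^d` which is continuous
at every point of the set (`exists_riemann_extension`). Applied to `x ↦ h₁ (x + α)`, this produces
the transfer function.

Density of the orbits (`exists_add_smul_mem`) is Kronecker's theorem. It follows from Weyl
equidistribution on the torus (`wavg_tendsto_integral`): the averages of a nontrivial character
along `k ↦ k • a` are geometric sums tending to zero, and trigonometric polynomials are dense in the
continuous functions.
-/
open MeasureTheory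

/-- The multiplicity function of the projection of `S ⊆ ℝ^d` to the torus `ℝ^d/ℤ^d`,
viewed as a `ℤ^d`-periodic function on `ℝ^d`. -/
noncomputable def multFn {d : ℕ} (S : Set (Fin d → ℝ)) (x : Fin d → ℝ) : ℝ :=
  ∑' k : Fin d → ℤ, Set.indicator S (fun _ => (1 : ℝ)) (x + fun i => (k i : ℝ))

/-- The discrepancy `∑_{k=0}^{n-1} χ_S(x + k v) − n · Leb(S)`. -/
noncomputable def disc {d : ℕ} (v : Fin d → ℝ) (S : Set (Fin d → ℝ)) (n : ℕ)
    (x : Fin d → ℝ) : ℝ :=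
  (∑ k ∈ Finset.range n, multFn S (x + (k : ℝ) • v)) - n * (volume S).toReal

/-- `S` is a bounded remainder set with respect to the vector `v`. -/
def IsBRS {d : ℕ} (v : Fin d → ℝ) (S : Set (Fin d → ℝ)) : Prop :=
  ∃ C : ℝ, ∀ᵐ x : Fin d → ℝ, ∀ n : ℕ, 1 ≤ n → |disc v S n x| ≤ C

/-- `α ∈ ℝ^d` is an irrational vector: `1, α₁, …, α_d` are linearly independent over `ℚ`. -/
def IsIrrationalVector {d : ℕ} (α : Fin d → ℝ) : Prop :=
  ∀ (n₀ : ℤ) (n : Fin d → ℤ), (n₀ : ℝ) + ∑ i, (n i : ℝ) * α i = 0 → n₀ = 0 ∧ n = 0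

/-- The subgroup `ℤα + ℤ^d` of `ℝ^d`. -/
def lat {d : ℕ} (α : Fin d → ℝ) : Set (Fin d → ℝ) :=
  {v | ∃ (q : ℤ) (p : Fin d → ℤ), v = (q : ℝ) • α + fun i => (p i : ℝ)}

/-- The parallelepiped spanned by the vectors `v 1, …, v d`. -/
def paral {d : ℕ} (v : Fin d → Fin d → ℝ) : Set (Fin d → ℝ) :=
  {x | ∃ t : Fin d → ℝ, (∀ k, 0 ≤ t k ∧ t k < 1) ∧ x = ∑ k, t k • v k}

/-- A `ℤ^d`-periodic function on `ℝ^d`, i.e. a function on the torus. -/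
def IsZdPeriodic {d : ℕ} (g : (Fin d → ℝ) → ℝ) : Prop :=
  ∀ (x : Fin d → ℝ) (k : Fin d → ℤ), g (x + fun i => (k i : ℝ)) = g x

/-- `g` is a transfer function for `S` with respect to `v`:
a function on the torus with `χ_S(x) − Leb S = g(x) − g(x−v)` a.e. -/
def IsTransfer {d : ℕ} (v : Fin d → ℝ) (S : Set (Fin d → ℝ)) (g : (Fin d → ℝ) → ℝ) : Prop :=
  IsZdPeriodic g ∧
    ∀ᵐ x : Fin d → ℝ, multFn S x - (volume S).toReal = g x - g (x - v)

/-- A bounded function whose set of discontinuity points is Lebesgue-null. -/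
def RiemannIntegrableFn {d : ℕ} (g : (Fin d → ℝ) → ℝ) : Prop :=
  (∃ M : ℝ, ∀ x, |g x| ≤ M) ∧ volume {x | ¬ ContinuousAt g x} = 0

/-- A bounded set is Riemann measurable if its boundary is Lebesgue-null. -/
def IsRiemannMeasurable {d : ℕ} (S : Set (Fin d → ℝ)) : Prop :=
  Bornology.IsBounded S ∧ volume (frontier S) = 0

/-- `S` and `S'` are equidecomposable, with pieces satisfying the predicate `P`,
using translations by vectors in `Γ`. -/
def EquidecompBy {d : ℕ} (P : Set (Fin d → ℝ) → Prop)
    (S S' : Set (Fin d → ℝ)) (Γ : Set (Fin d → ℝ)) : Prop :=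
  ∃ (N : ℕ) (A : Fin N → Set (Fin d → ℝ)) (γ : Fin N → Fin d → ℝ),
    (∀ i, P (A i)) ∧ (∀ i, γ i ∈ Γ) ∧
    (∀ i j, i ≠ j → volume (A i ∩ A j) = 0) ∧
    volume (symmDiff S (⋃ i, A i)) = 0 ∧
    (∀ i j, i ≠ j → volume (((fun x => x + γ i) '' A i) ∩ ((fun x => x + γ j) '' A j)) = 0) ∧
    volume (symmDiff S' (⋃ i, (fun x => x + γ i) '' A i)) = 0

/-- A set is centrally symmetric if it equals its reflection about some point `c`. -/
def IsCentrallySymmetric {d : ℕ} (A : Set (Fin d → ℝ)) : Prop :=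
  ∃ c : Fin d → ℝ, ∀ x, x ∈ A ↔ (2 : ℝ) • c - x ∈ A

open Filter Topology

/-! ### Extension from a set of full measure -/

lemma abs_limsup_sub_le {X : Type*} {F : Filter X} [F.NeBot] {u : X → ℝ} {c ε : ℝ}
    (h : ∀ᶠ y in F, |u y - c| ≤ ε) : |limsup u F - c| ≤ ε := by
  have h1 : ∀ᶠ y in F, u y ≤ c + ε := h.mono fun y hy => by
    rw [abs_le] at hy; linarith
  have h2 : ∀ᶠ y in F, c - ε ≤ u y := h.mono fun y hy => by
    rw [abs_le] at hy; linarith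
  have b1 : F.IsBoundedUnder (· ≤ ·) u := ⟨_, h1⟩
  have b2 : F.IsBoundedUnder (· ≥ ·) u := ⟨_, h2⟩
  have e1 := limsup_le_of_le b2.isCoboundedUnder_le h1
  have e2 := le_limsup_of_frequently_le h2.frequently b1
  rw [abs_le]; constructor <;> linarith

/-- A bounded periodic function continuous on a periodic conull set `G` agrees on `G` with a
periodic Riemann integrable function, namely its limit superior along `𝓝[G] x`. -/
lemma exists_riemann_extension {d : ℕ} {G : Set (Fin d → ℝ)} {H : (Fin d → ℝ) → ℝ} {M : ℝ}
    (hG : ∀ᵐ x : Fin d → ℝ, x ∈ G)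
    (hGper : ∀ x ∈ G, ∀ k : Fin d → ℤ, (x + fun i => (k i : ℝ)) ∈ G)
    (hHper : ∀ x ∈ G, ∀ k : Fin d → ℤ, H (x + fun i => (k i : ℝ)) = H x)
    (hM : ∀ x ∈ G, |H x| ≤ M) (hc : ContinuousOn H G) :
    ∃ g : (Fin d → ℝ) → ℝ, IsZdPeriodic g ∧ RiemannIntegrableFn g ∧ ∀ x ∈ G, g x = H x := by
  have hd : Dense G := Measure.dense_of_ae hG
  have hne : ∀ x, (𝓝[G] x).NeBot := fun x => mem_closure_iff_nhdsWithin_neBot.1 (hd x)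
  have heq : ∀ x ∈ G, limsup H (𝓝[G] x) = H x := fun x hx => by
    have := hne x
    exact (hc x hx).limsup_eq
  refine ⟨fun x => limsup H (𝓝[G] x), ?_, ⟨⟨M, fun x => ?_⟩, ?_⟩, heq⟩
  · intro x k
    set v : Fin d → ℝ := fun i => (k i : ℝ) with hv
    have himg : (fun y => y + v) '' G = G := by
      ext y
      constructor
      · rintro ⟨z, hz, rfl⟩
        exact hGper z hz k
      · intro hy
        refine ⟨y - v, ?_, by simp⟩
        have := hGper y hy (-k)
        convert this using 1
        ext i
        simp [hv, sub_eq_add_neg]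
    have hmap : map (fun y => y + v) (𝓝[G] x) = 𝓝[G] (x + v) := by
      have := (Homeomorph.addRight v).isEmbedding.map_nhdsWithin_eq G x
      simp only [Homeomorph.coe_addRight] at this
      rw [this, himg]
    have : limsup H (𝓝[G] (x + v)) = limsup (H ∘ fun y => y + v) (𝓝[G] x) := by
      rw [← hmap]; rfl
    change limsup H (𝓝[G] (x + v)) = limsup H (𝓝[G] x)
    rw [this]
    exact limsup_congr (eventually_mem_nhdsWithin.mono fun y hy => hHper y hy k)
  · have := hne x
    have := abs_limsup_sub_le (F := 𝓝[G] x) (u := H) (c := 0) (ε := M)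
      (eventually_mem_nhdsWithin.mono fun y hy => by simpa using hM y hy)
    simpa using this
  · refine measure_mono_null (t := Gᶜ) (fun x hx hxG => hx ?_) (mem_ae_iff.1 hG)
    rw [Metric.continuousAt_iff']
    intro ε hε
    -- If `H` is `ε / 2`-close to `H x` on `G` near `x`, so are its upper limits at points near `x`.
    have h1 := (Metric.tendsto_nhds.1 (hc x hxG)) (ε / 2) (half_pos hε)
    rw [eventually_nhdsWithin_iff, ← eventually_eventually_nhds] at h1
    filter_upwards [h1] with z hz
    have := hne z
    rw [heq x hxG, Real.dist_eq]
    refine lt_of_le_of_lt (abs_limsup_sub_le ?_) (half_lt_self hε)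
    rw [eventually_nhdsWithin_iff]
    filter_upwards [hz] with y hy hyG
    have := hy hyG
    rw [Real.dist_eq] at this
    exact this.le

/-! ### Multiplicity function, discrepancies and the good set -/

lemma multFn_add_int {d : ℕ} (S : Set (Fin d → ℝ)) (x : Fin d → ℝ) (k : Fin d → ℤ) :
    multFn S (x + fun i => (k i : ℝ)) = multFn S x := by
  unfold multFn
  rw [← (Equiv.addLeft k).tsum_eq fun l : Fin d → ℤ =>
    Set.indicator S (fun _ => (1 : ℝ)) (x + fun i => (l i : ℝ))]
  refine tsum_congr fun l => ?_
  congr 1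
  ext i
  simp [add_assoc]

lemma disc_add_int {d : ℕ} (α : Fin d → ℝ) (S : Set (Fin d → ℝ)) (n : ℕ) (x : Fin d → ℝ)
    (k : Fin d → ℤ) : disc α S n (x + fun i => (k i : ℝ)) = disc α S n x := by
  unfold disc
  congr 1
  refine Finset.sum_congr rfl fun m _ => ?_
  rw [add_right_comm, multFn_add_int]

/-- Away from the integer translates of the boundary of a bounded set `S`, the function `χ_S` is
continuous: near `x` only finitely many `k` contribute to the sum defining it. -/
lemma continuousAt_multFn {d : ℕ} {S : Set (Fin d → ℝ)} (hS : Bornology.IsBounded S)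
    {x : Fin d → ℝ} (hx : ∀ k : Fin d → ℤ, (x + fun i => (k i : ℝ)) ∉ frontier S) :
    ContinuousAt (multFn S) x := by
  obtain ⟨R, hR⟩ := hS.exists_norm_le
  have hfin : {k : Fin d → ℤ | ‖(fun i => (k i : ℝ))‖ ≤ R + ‖x‖ + 1}.Finite := by
    refine (Set.Finite.pi' (t := fun _ : Fin d => {m : ℤ | |(m : ℝ)| ≤ R + ‖x‖ + 1})
      fun i => ?_).subset fun k hk i => (norm_le_pi_norm (fun i => (k i : ℝ)) i).trans hk
    refine (Set.finite_Icc (-⌊R + ‖x‖ + 1⌋) ⌊R + ‖x‖ + 1⌋).subset fun m hm => ?_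
    rw [Set.mem_ofPred_eq, ← Int.cast_abs, ← Int.le_floor, abs_le] at hm
    exact hm
  have hloc : (fun y => ∑ k ∈ hfin.toFinset,
      Set.indicator S (fun _ => (1 : ℝ)) (y + fun i => (k i : ℝ))) =ᶠ[𝓝 x] multFn S := by
    filter_upwards [Metric.ball_mem_nhds x one_pos] with y hy
    refine (tsum_eq_sum fun k hk => Set.indicator_of_notMem (fun hmem => hk ?_) _).symm
    rw [Set.Finite.mem_toFinset, Set.mem_ofPred_eq]
    have h1 := hR _ hmem
    have h2 : ‖(fun i => (k i : ℝ))‖ ≤ ‖y + fun i => (k i : ℝ)‖ + ‖y‖ := by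
      simpa using norm_sub_le (y + fun i => (k i : ℝ)) y
    have h3 : ‖y‖ ≤ ‖x‖ + 1 := by
      have := norm_le_norm_add_norm_sub' y x
      rw [Metric.mem_ball, dist_eq_norm] at hy
      linarith
    linarith
  refine ContinuousAt.congr (tendsto_finsetSum _ fun k _ => ?_) hloc
  exact ContinuousAt.comp (f := fun y => y + fun i => (k i : ℝ))
    (continuousOn_const.continuousAt_indicator (hx k)) (by fun_prop)

/-- The points of `ℝ^d` none of whose translates by the group `ℤα + ℤ^d` lies on the boundary of
`S`. -/
def goodSet {d : ℕ} (α : Fin d → ℝ) (S : Set (Fin d → ℝ)) : Set (Fin d → ℝ) :=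
  {x | ∀ v ∈ lat α, x + v ∉ frontier S}

lemma smul_add_mem_lat {d : ℕ} (α : Fin d → ℝ) (q : ℤ) (k : Fin d → ℤ) :
    ((q : ℝ) • α + fun i => (k i : ℝ)) ∈ lat α := ⟨q, k, rfl⟩

lemma add_mem_goodSet {d : ℕ} {α : Fin d → ℝ} {S : Set (Fin d → ℝ)} {x v : Fin d → ℝ}
    (hx : x ∈ goodSet α S) (hv : v ∈ lat α) : x + v ∈ goodSet α S := by
  intro w hw
  obtain ⟨q, k, rfl⟩ := hv
  obtain ⟨q', k', rfl⟩ := hw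
  have h : x + ((q : ℝ) • α + fun i => (k i : ℝ)) + ((q' : ℝ) • α + fun i => (k' i : ℝ)) =
      x + (((q + q' : ℤ) : ℝ) • α + fun i => ((k + k') i : ℝ)) := by
    ext i
    simp
    ring
  rw [h]
  exact hx _ (smul_add_mem_lat α (q + q') (k + k'))

lemma add_smul_mem_goodSet {d : ℕ} {α : Fin d → ℝ} {S : Set (Fin d → ℝ)} {x : Fin d → ℝ}
    (hx : x ∈ goodSet α S) (q : ℤ) : x + (q : ℝ) • α ∈ goodSet α S := by
  have := add_mem_goodSet hx (smul_add_mem_lat α q 0)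
  convert this using 2
  ext i; simp

lemma add_int_mem_goodSet {d : ℕ} {α : Fin d → ℝ} {S : Set (Fin d → ℝ)} {x : Fin d → ℝ}
    (hx : x ∈ goodSet α S) (k : Fin d → ℤ) : (x + fun i => (k i : ℝ)) ∈ goodSet α S := by
  have := add_mem_goodSet hx (smul_add_mem_lat α 0 k)
  convert this using 2
  ext i; simp

lemma ae_mem_goodSet {d : ℕ} (α : Fin d → ℝ) {S : Set (Fin d → ℝ)}
    (hS : volume (frontier S) = 0) : ∀ᵐ x : Fin d → ℝ, x ∈ goodSet α S := by
  have hc : (lat α).Countable := by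
    have : lat α = Set.range fun p : ℤ × (Fin d → ℤ) => (p.1 : ℝ) • α + fun i => (p.2 i : ℝ) := by
      ext v
      simp [lat, eq_comm]
    rw [this]
    exact Set.countable_range _
  change ∀ᵐ x : Fin d → ℝ, ∀ v ∈ lat α, x + v ∉ frontier S
  rw [ae_ball_iff hc]
  intro v _
  have := measure_preimage_add_right (volume : Measure (Fin d → ℝ)) v (frontier S)
  rw [hS] at this
  exact measure_eq_zero_iff_ae_notMem.1 this

lemma continuousAt_disc {d : ℕ} {α : Fin d → ℝ} {S : Set (Fin d → ℝ)}
    (hS : Bornology.IsBounded S) {x : Fin d → ℝ} (hx : x ∈ goodSet α S) (n : ℕ) :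
    ContinuousAt (disc α S n) x := by
  refine ContinuousAt.sub (tendsto_finsetSum _ fun m _ => ?_) continuousAt_const
  refine ContinuousAt.comp (f := fun y => y + (m : ℝ) • α) (continuousAt_multFn hS fun k => ?_)
    (by fun_prop)
  rw [add_assoc]
  exact hx _ (by simpa using smul_add_mem_lat α m k)

/-- The almost everywhere bound on the discrepancies holds at every point of the good set, because
the discrepancies are continuous there and sets of full measure are dense. The constant is made
nonnegative to cover `n = 0`. -/
lemma abs_disc_le {d : ℕ} {α : Fin d → ℝ} {S : Set (Fin d → ℝ)}
    (hS : IsRiemannMeasurable S) {C : ℝ}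
    (hC : ∀ᵐ x : Fin d → ℝ, ∀ n : ℕ, 1 ≤ n → |disc α S n x| ≤ C)
    {x : Fin d → ℝ} (hx : x ∈ goodSet α S) (n : ℕ) : |disc α S n x| ≤ max C 0 := by
  rcases Nat.eq_zero_or_pos n with rfl | hn
  · simp [disc]
  refine le_trans ?_ (le_max_left _ _)
  by_contra! h
  have h1 : ∀ᶠ y in 𝓝 x, C < |disc α S n y| :=
    (continuousAt_disc hS.1 hx n).abs.eventually (lt_mem_nhds h)
  obtain ⟨y, hy, hy'⟩ := ((Measure.dense_of_ae hC).inter_nhds_nonempty h1)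
  exact absurd (hy n hn) (not_le.2 hy')

/-- The two-sided Birkhoff cocycle of `f = χ_S - Leb S` under translation by `α`: for `n ≥ 0` it is
`∑_{k=0}^{n-1} f(x + kα)` at `q = n` and `-∑_{k=1}^{n} f(x - kα)` at `q = -n`. Since
`Int.toNat` vanishes on negative integers, at most one of the two terms is nonzero. -/
noncomputable def coc {d : ℕ} (α : Fin d → ℝ) (S : Set (Fin d → ℝ)) (q : ℤ)
    (x : Fin d → ℝ) : ℝ :=
  disc α S q.toNat x - disc α S (-q).toNat (x + (q : ℝ) • α)

lemma coc_add_int {d : ℕ} (α : Fin d → ℝ) (S : Set (Fin d → ℝ)) (q : ℤ) (x : Fin d → ℝ)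
    (k : Fin d → ℤ) : coc α S q (x + fun i => (k i : ℝ)) = coc α S q x := by
  unfold coc
  rw [add_right_comm, disc_add_int, disc_add_int]

lemma coc_add_one {d : ℕ} (α : Fin d → ℝ) (S : Set (Fin d → ℝ)) (q : ℤ) (x : Fin d → ℝ) :
    coc α S (q + 1) x = (multFn S x - (volume S).toReal) + coc α S q (x + α) := by
  have h1 : ∀ (n : ℕ) (y : Fin d → ℝ), disc α S (n + 1) y =
      (multFn S y - (volume S).toReal) + disc α S n (y + α) := by
    intro n y
    unfold disc
    rw [Finset.sum_range_succ']
    have : ∀ m : ℕ, y + ((m + 1 : ℕ) : ℝ) • α = y + α + (m : ℝ) • α := fun m => by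
      push_cast; module
    simp only [this]
    push_cast
    simp
    ring
  have h2 : ∀ (n : ℕ) (y : Fin d → ℝ), disc α S (n + 1) y =
      disc α S n y + (multFn S (y + (n : ℝ) • α) - (volume S).toReal) := by
    intro n y
    unfold disc
    rw [Finset.sum_range_succ]
    push_cast
    ring
  have h0 : ∀ y, disc α S 0 y = 0 := fun y => by simp [disc]
  unfold coc
  rcases q with n | n
  · have e1 : (Int.ofNat n + 1).toNat = n + 1 := by simp
    have e2 : (-(Int.ofNat n + 1)).toNat = 0 := by simp
    have e3 : (Int.ofNat n).toNat = n := rfl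
    have e4 : (-(Int.ofNat n)).toNat = 0 := by simp
    rw [e1, e2, e3, e4, h0, h0, h1]
    ring
  · have e1 : (Int.negSucc n + 1).toNat = 0 := by omega
    have e2 : (-(Int.negSucc n + 1)).toNat = n := by omega
    have e3 : (Int.negSucc n).toNat = 0 := rfl
    have e4 : (-(Int.negSucc n)).toNat = n + 1 := by omega
    rw [e1, e2, e3, e4, h0, h0, h2]
    have e5 : x + α + ((Int.negSucc n : ℤ) : ℝ) • α = x + ((Int.negSucc n + 1 : ℤ) : ℝ) • α := by
      push_cast; module
    have e6 : x + ((Int.negSucc n + 1 : ℤ) : ℝ) • α + (n : ℝ) • α = x := by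
      rw [Int.negSucc_eq]; push_cast; module
    rw [e5, e6]
    ring

lemma abs_coc_le {d : ℕ} {α : Fin d → ℝ} {S : Set (Fin d → ℝ)} {C : ℝ}
    (hC : ∀ x ∈ goodSet α S, ∀ n, |disc α S n x| ≤ C)
    {x : Fin d → ℝ} (hx : x ∈ goodSet α S) (q : ℤ) : |coc α S q x| ≤ 2 * C := by
  have h1 := hC x hx q.toNat
  have h2 := hC _ (add_smul_mem_goodSet hx q) (-q).toNat
  have := abs_sub (disc α S q.toNat x) (disc α S (-q).toNat (x + (q : ℝ) • α))
  unfold coc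
  linarith

lemma continuousAt_coc {d : ℕ} {α : Fin d → ℝ} {S : Set (Fin d → ℝ)}
    (hS : Bornology.IsBounded S) {x : Fin d → ℝ} (hx : x ∈ goodSet α S) (q : ℤ) :
    ContinuousAt (coc α S q) x :=
  (continuousAt_disc hS hx _).sub <|
    ContinuousAt.comp (f := fun y => y + (q : ℝ) • α)
      (continuousAt_disc hS (add_smul_mem_goodSet hx q) _) (by fun_prop)

/-! ### Kronecker's theorem via Weyl equidistribution -/

section Kronecker

variable {d : ℕ}

/-- The average of `F` over the points `k • a`, `0 ≤ k < N`, of the torus (equal to `0` for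
`N = 0`). -/
noncomputable def wavg (a : UnitAddTorus (Fin d)) (F : C(UnitAddTorus (Fin d), ℂ)) (N : ℕ) : ℂ :=
  (N : ℂ)⁻¹ * ∑ k ∈ Finset.range N, F (k • a)

lemma wavg_tendsto_mFourier (a : UnitAddTorus (Fin d)) (n : Fin d → ℤ)
    (h : UnitAddTorus.mFourier n a ≠ 1) :
    Tendsto (wavg a (UnitAddTorus.mFourier n)) atTop (𝓝 0) := by
  have hnorm : ∀ x, ‖UnitAddTorus.mFourier n x‖ ≤ 1 := fun x => by
    simpa [UnitAddTorus.mFourier_norm] using (UnitAddTorus.mFourier n).norm_coe_le_norm x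
  have hadd : ∀ k : ℕ, UnitAddTorus.mFourier n (k • a) = (UnitAddTorus.mFourier n a) ^ k := by
    intro k
    simp only [UnitAddTorus.mFourier, ContinuousMap.coe_mk, ← Finset.prod_pow, Pi.smul_apply]
    refine Finset.prod_congr rfl fun i _ => ?_
    rw [fourier_apply, fourier_apply, smul_comm, AddCircle.toCircle_nsmul, Circle.coe_pow]
  have : wavg a (UnitAddTorus.mFourier n) = fun N : ℕ => (N : ℂ)⁻¹ *
      (((UnitAddTorus.mFourier n a) ^ N - 1) / (UnitAddTorus.mFourier n a - 1)) := by
    ext N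
    simp only [wavg, hadd, geom_sum_eq h]
  rw [this]
  refine squeeze_zero_norm (a := fun N : ℕ => (N : ℝ)⁻¹ * (2 / ‖UnitAddTorus.mFourier n a - 1‖))
    (fun N => ?_) ?_
  · rw [norm_mul, norm_div, norm_inv, Complex.norm_natCast]
    gcongr
    refine (norm_sub_le _ _).trans ?_
    rw [norm_pow, norm_one]
    have := pow_le_one₀ (n := N) (norm_nonneg _) (hnorm a)
    linarith
  · simpa using (tendsto_inv_atTop_nhds_zero_nat (𝕜 := ℝ)).mul_const
      (2 / ‖UnitAddTorus.mFourier n a - 1‖)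

lemma mFourier_add_arg (n : Fin d → ℤ) (x a : UnitAddTorus (Fin d)) :
    UnitAddTorus.mFourier n (x + a) = UnitAddTorus.mFourier n x * UnitAddTorus.mFourier n a := by
  simp [UnitAddTorus.mFourier, fourier_apply, Finset.prod_mul_distrib, AddCircle.toCircle_add,
    smul_add]

/-- Weyl equidistribution: if no nontrivial character of the torus is trivial at `a`, the averages
of a continuous function along the multiples of `a` converge to its integral. -/
lemma wavg_tendsto_integral (μ : Measure (UnitAddTorus (Fin d))) [μ.IsAddHaarMeasure]
    [IsProbabilityMeasure μ] (a : UnitAddTorus (Fin d))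
    (ha : ∀ n : Fin d → ℤ, n ≠ 0 → UnitAddTorus.mFourier n a ≠ 1)
    (F : C(UnitAddTorus (Fin d), ℂ)) : Tendsto (wavg a F) atTop (𝓝 (∫ x, F x ∂μ)) := by
  have hint : ∀ F : C(UnitAddTorus (Fin d), ℂ), Integrable F μ := fun F =>
    F.continuous.integrable_of_hasCompactSupport (HasCompactSupport.of_compactSpace _)
  have hspan : ∀ P ∈ Submodule.span ℂ (Set.range (UnitAddTorus.mFourier (d := Fin d))),
      Tendsto (wavg a P) atTop (𝓝 (∫ x, P x ∂μ)) := by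
    intro P hP
    induction hP using Submodule.span_induction with
    | mem P hP =>
      obtain ⟨n, rfl⟩ := hP
      by_cases hn : n = 0
      · subst hn
        simp only [UnitAddTorus.mFourier_zero, ContinuousMap.one_apply, integral_const,
          probReal_univ, one_smul]
        refine tendsto_const_nhds.congr' ?_
        filter_upwards [eventually_ge_atTop 1] with N hN
        have : (N : ℂ) ≠ 0 := by exact_mod_cast (by omega : N ≠ 0)
        simp [wavg, this]
      · -- Translation by `a` multiplies the integral of the character by a number other than `1`.
        have h0 : ∫ x, UnitAddTorus.mFourier n x ∂μ = 0 := by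
          have h := integral_add_right_eq_self (μ := μ) (fun x => UnitAddTorus.mFourier n x) a
          simp only [mFourier_add_arg, integral_mul_const] at h
          by_contra hne
          exact ha n hn (mul_left_cancel₀ hne (by rw [h, mul_one]))
        rw [h0]
        exact wavg_tendsto_mFourier a n (ha n hn)
    | zero =>
      have e : wavg a 0 = fun _ => 0 := by
        ext N; simp [wavg]
      simp [e]
    | add P Q _ _ hP hQ =>
      have e : wavg a (P + Q) = fun N => wavg a P N + wavg a Q N := by
        ext N; simp [wavg, Finset.sum_add_distrib, mul_add]
      rw [e]
      simp only [ContinuousMap.add_apply]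
      rw [integral_add (hint P) (hint Q)]
      exact hP.add hQ
    | smul c P _ hP =>
      have e : wavg a (c • P) = fun N => c * wavg a P N := by
        ext N; simp only [wavg, ContinuousMap.smul_apply, smul_eq_mul, ← Finset.mul_sum]; ring
      rw [e]
      simp only [ContinuousMap.smul_apply, smul_eq_mul]
      rw [integral_const_mul]
      exact hP.const_mul c
  rw [Metric.tendsto_nhds]
  intro ε hε
  have hF : F ∈ closure (Submodule.span ℂ (Set.range (UnitAddTorus.mFourier (d := Fin d))) :
      Set C(UnitAddTorus (Fin d), ℂ)) := by
    have := UnitAddTorus.span_mFourier_closure_eq_top (d := Fin d)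
    have h2 : F ∈ (Submodule.span ℂ
      (Set.range (UnitAddTorus.mFourier (d := Fin d)))).topologicalClosure := by
      rw [this]; trivial
    exact h2
  obtain ⟨P, hP, hd⟩ := Metric.mem_closure_iff.1 hF (ε / 3) (by positivity)
  have hpt : ∀ x, ‖F x - P x‖ ≤ ε / 3 := fun x => by
    rw [dist_eq_norm] at hd
    exact ((F - P).norm_coe_le_norm x).trans hd.le
  have h2 : ‖(∫ x, F x ∂μ) - ∫ x, P x ∂μ‖ ≤ ε / 3 := by
    rw [← integral_sub (hint F) (hint P)]
    simpa using norm_integral_le_of_norm_le_const (μ := μ) (ae_of_all _ hpt)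
  filter_upwards [Metric.tendsto_nhds.1 (hspan P hP) (ε / 3) (by positivity)] with N hN
  have h1 : ‖wavg a F N - wavg a P N‖ ≤ ε / 3 := by
    rcases Nat.eq_zero_or_pos N with rfl | hN0
    · simp [wavg]; positivity
    rw [wavg, wavg, ← mul_sub, ← Finset.sum_sub_distrib, norm_mul, norm_inv, Complex.norm_natCast]
    have hs : ‖∑ k ∈ Finset.range N, (F (k • a) - P (k • a))‖ ≤ N * (ε / 3) := by
      refine (norm_sum_le_of_le _ fun k _ => hpt _).trans ?_
      simp
    have hN' : (0 : ℝ) < N := by exact_mod_cast hN0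
    calc _ ≤ (N : ℝ)⁻¹ * (N * (ε / 3)) := by gcongr
      _ = ε / 3 := by field_simp
  rw [dist_eq_norm] at hN ⊢
  have : wavg a F N - ∫ x, F x ∂μ = (wavg a F N - wavg a P N) + (wavg a P N - ∫ x, P x ∂μ)
      - ((∫ x, F x ∂μ) - ∫ x, P x ∂μ) := by ring
  rw [this]
  have t1 := norm_sub_le ((wavg a F N - wavg a P N) + (wavg a P N - ∫ x, P x ∂μ))
    ((∫ x, F x ∂μ) - ∫ x, P x ∂μ)
  have t2 := norm_add_le (wavg a F N - wavg a P N) (wavg a P N - ∫ x, P x ∂μ)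
  linarith

/-- The multiples of `a` meet every nonempty open set: the averages of a bump function supported in
an avoided open set would vanish, yet tend to its positive integral. -/
lemma exists_nsmul_mem (a : UnitAddTorus (Fin d))
    (ha : ∀ n : Fin d → ℤ, n ≠ 0 → UnitAddTorus.mFourier n a ≠ 1)
    {U : Set (UnitAddTorus (Fin d))} (hU : IsOpen U) (hne : U.Nonempty) : ∃ k : ℕ, k • a ∈ U := by
  by_contra! hcon
  obtain ⟨p, hp⟩ := hne
  let μ : Measure (UnitAddTorus (Fin d)) := Measure.addHaarMeasure ⊤
  have : IsProbabilityMeasure μ := ⟨by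
    simpa using Measure.addHaarMeasure_self (K₀ := (⊤ : TopologicalSpace.PositiveCompacts
      (UnitAddTorus (Fin d))))⟩
  obtain ⟨f, hf0, hf1, hf⟩ := exists_continuous_zero_one_of_isClosed (s := Uᶜ) (t := {p})
    hU.isClosed_compl isClosed_singleton (by simpa using hp)
  let F : C(UnitAddTorus (Fin d), ℂ) := ⟨fun x => (f x : ℂ), by fun_prop⟩
  have h := wavg_tendsto_integral μ a ha F
  have hz : wavg a F = fun _ => 0 := by
    ext N
    have : ∀ k : ℕ, F (k • a) = 0 := fun k => by
      have : f (k • a) = 0 := hf0 (hcon k)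
      simp [F, this]
    simp [wavg, this]
  rw [hz] at h
  have h0 := tendsto_nhds_unique h tendsto_const_nhds
  have h1 : ∫ x, F x ∂μ = ((∫ x, f x ∂μ : ℝ) : ℂ) := integral_ofReal
  rw [h1, Complex.ofReal_eq_zero] at h0
  have hpos : 0 < ∫ x, f x ∂μ :=
    f.continuous.integral_pos_of_hasCompactSupport_nonneg_nonzero (x := p)
      (HasCompactSupport.of_compactSpace _) (fun x => (hf x).1) (by simp [hf1 rfl])
  exact hpos.ne' h0

lemma mFourier_ne_one {α : Fin d → ℝ} (hα : IsIrrationalVector α) (n : Fin d → ℤ) (hn : n ≠ 0) :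
    UnitAddTorus.mFourier n (fun i => (α i : UnitAddCircle)) ≠ 1 := by
  intro h
  have h1 : UnitAddTorus.mFourier n (fun i => (α i : UnitAddCircle)) =
      Complex.exp (2 * Real.pi * Complex.I * (∑ i, (n i : ℝ) * α i : ℝ)) := by
    simp only [UnitAddTorus.mFourier, ContinuousMap.coe_mk, fourier_coe_apply]
    rw [← Complex.exp_sum]
    push_cast
    rw [Finset.mul_sum]
    congr 1
    refine Finset.sum_congr rfl fun i _ => by simp; ring
  rw [h1, Complex.exp_eq_one_iff] at h
  obtain ⟨m, hm⟩ := h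
  have h2 : ((∑ i, (n i : ℝ) * α i : ℝ) : ℂ) = m := by
    have := Complex.two_pi_I_ne_zero
    rw [mul_comm (m : ℂ)] at hm
    exact mul_left_cancel₀ this hm
  have h3 : (∑ i, (n i : ℝ) * α i : ℝ) = m := by exact_mod_cast h2
  exact hn (hα (-m) n (by rw [h3]; push_cast; ring)).2

/-- Kronecker's theorem: the forward orbit of `y` under translation by an irrational vector `α` is
dense modulo `ℤ^d`. -/
lemma exists_add_smul_mem {α : Fin d → ℝ} (hα : IsIrrationalVector α) (y : Fin d → ℝ)
    {U : Set (Fin d → ℝ)} (hU : IsOpen U) (hne : U.Nonempty) :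
    ∃ (n : ℕ) (k : Fin d → ℤ), (y + (n : ℝ) • α + fun i => (k i : ℝ)) ∈ U := by
  let π : (Fin d → ℝ) → UnitAddTorus (Fin d) := Pi.map fun _ t => (t : UnitAddCircle)
  have hπ : IsOpenMap π := IsOpenMap.piMap (fun _ => QuotientAddGroup.isOpenMap_coe)
    (Eventually.of_forall fun _ => Quotient.mk_surjective)
  have hV : IsOpen ((fun x => y + x) ⁻¹' U) := hU.preimage (by fun_prop)
  have hVne : ((fun x => y + x) ⁻¹' U).Nonempty := by
    obtain ⟨u, hu⟩ := hne
    exact ⟨u - y, by simpa using hu⟩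
  obtain ⟨n, u, hu, hun⟩ := exists_nsmul_mem _ (mFourier_ne_one hα) (hπ _ hV) (hVne.image π)
  have h : ∀ i, ∃ k : ℤ, u i = (n : ℝ) * α i + k := fun i => by
    have := congrFun hun i
    have h2 : ((u i : ℝ) : UnitAddCircle) = ((n : ℝ) * α i : ℝ) := by
      rw [← nsmul_eq_mul, AddCircle.coe_nsmul]; exact this
    rw [← sub_eq_zero, ← AddCircle.coe_sub, AddCircle.coe_eq_zero_iff] at h2
    obtain ⟨k, hk⟩ := h2
    exact ⟨k, by rw [zsmul_one] at hk; linarith⟩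
  choose k hk using h
  refine ⟨n, k, ?_⟩
  have : (y + (n : ℝ) • α + fun i => (k i : ℝ)) = y + u := by
    ext i
    simp [hk, add_assoc]
  rw [this]
  exact hu
end Kronecker

/-! ### The transfer function -/

/-- On the good set there is a bounded continuous periodic solution of the cohomological equation
`h (x + α) - h x = χ_S x - Leb S`. -/
lemma exists_transfer_on_goodSet {d : ℕ} {α : Fin d → ℝ} (hα : IsIrrationalVector α)
    {S : Set (Fin d → ℝ)} (hS : IsRiemannMeasurable S) (hbrs : IsBRS α S) :
    ∃ h : (Fin d → ℝ) → ℝ, (∃ M, ∀ x ∈ goodSet α S, |h x| ≤ M) ∧ ContinuousOn h (goodSet α S) ∧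
      (∀ x ∈ goodSet α S, ∀ k : Fin d → ℤ, h (x + fun i => (k i : ℝ)) = h x) ∧
      ∀ x ∈ goodSet α S, h (x + α) = (multFn S x - (volume S).toReal) + h x := by
  obtain ⟨C, hC⟩ := hbrs
  set M := 2 * max C 0
  have hb : ∀ x ∈ goodSet α S, ∀ q, |coc α S q x| ≤ M := fun x hx q =>
    abs_coc_le (fun y hy n => abs_disc_le hS hC hy n) hx q
  have bdd : ∀ x ∈ goodSet α S, BddAbove (Set.range fun q => -coc α S q x) ∧
      BddBelow (Set.range fun q => -coc α S q x) := by
    intro x hx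
    refine ⟨⟨M, ?_⟩, ⟨-M, ?_⟩⟩ <;> rintro _ ⟨q, rfl⟩ <;> have := abs_le.1 (hb x hx q)
    · simp only; linarith
    · simp only; linarith
  have hα' : ∀ x ∈ goodSet α S, x + α ∈ goodSet α S := fun x hx => by
    simpa using add_smul_mem_goodSet hx 1
  let h₁ : (Fin d → ℝ) → ℝ := fun x => ⨆ q, -coc α S q x
  let h₂ : (Fin d → ℝ) → ℝ := fun x => ⨅ q, -coc α S q x
  have shift : ∀ x q, -coc α S q (x + α) =
      -coc α S (q + 1) x + (multFn S x - (volume S).toReal) := fun x q => by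
    rw [coc_add_one]; ring
  have s₁ : ∀ x ∈ goodSet α S, h₁ (x + α) = (multFn S x - (volume S).toReal) + h₁ x := by
    intro x hx
    have e := (Equiv.addRight (1 : ℤ)).iSup_comp (g := fun q => -coc α S q x)
    simp only [Equiv.coe_addRight] at e
    simp only [h₁, shift]
    rw [← ciSup_add, e, add_comm]
    exact (bdd x hx).1.mono (by rintro _ ⟨q, rfl⟩; exact ⟨q + 1, rfl⟩)
  have s₂ : ∀ x ∈ goodSet α S, h₂ (x + α) = (multFn S x - (volume S).toReal) + h₂ x := by
    intro x hx
    have e := (Equiv.addRight (1 : ℤ)).iInf_comp (g := fun q => -coc α S q x)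
    simp only [Equiv.coe_addRight] at e
    simp only [h₂, shift]
    rw [← ciInf_add, e, add_comm]
    exact (bdd x hx).2.mono (by rintro _ ⟨q, rfl⟩; exact ⟨q + 1, rfl⟩)
  have p₁ : ∀ x (k : Fin d → ℤ), h₁ (x + fun i => (k i : ℝ)) = h₁ x := fun x k => by
    simp only [h₁, coc_add_int]
  have p₂ : ∀ x (k : Fin d → ℤ), h₂ (x + fun i => (k i : ℝ)) = h₂ x := fun x k => by
    simp only [h₂, coc_add_int]
  have cc : ∀ q, ContinuousOn (fun x => -coc α S q x) (goodSet α S) := fun q x hx =>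
    (continuousAt_coc hS.1 hx q).continuousWithinAt.neg
  have l₁ : LowerSemicontinuousOn h₁ (goodSet α S) :=
    lowerSemicontinuousOn_ciSup (fun x hx => (bdd x hx).1) fun q => (cc q).lowerSemicontinuousOn
  have u₂ : UpperSemicontinuousOn h₂ (goodSet α S) :=
    upperSemicontinuousOn_ciInf (fun x hx => (bdd x hx).2) fun q => (cc q).upperSemicontinuousOn
  have l₂ : LowerSemicontinuousOn (fun x => -h₂ x) (goodSet α S) := fun x hx c hc =>
    (u₂ x hx (-c) (by linarith)).mono fun y hy => by linarith
  have lu : LowerSemicontinuousOn (fun x => h₁ x + -h₂ x) (goodSet α S) := l₁.add l₂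
  have inv : ∀ x ∈ goodSet α S, ∀ n : ℕ,
      h₁ (x + (n : ℝ) • α) + -h₂ (x + (n : ℝ) • α) = h₁ x + -h₂ x := by
    intro x hx n
    induction n with
    | zero => simp
    | succ n ih =>
      have hn : x + (n : ℝ) • α ∈ goodSet α S := by
        simpa using add_smul_mem_goodSet hx (n : ℤ)
      have e : x + ((n + 1 : ℕ) : ℝ) • α = (x + (n : ℝ) • α) + α := by
        push_cast; module
      rw [e, s₁ _ hn, s₂ _ hn, ← ih]
      ring
  -- Lower semicontinuity at `x` compared along the dense orbit of `y`, on which `h₁ - h₂` is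
  -- constant.
  have le : ∀ x ∈ goodSet α S, ∀ y ∈ goodSet α S, h₁ x + -h₂ x ≤ h₁ y + -h₂ y := by
    intro x hx y hy
    refine le_of_forall_lt fun c hc => ?_
    have hev := lu x hx c hc
    rw [eventually_nhdsWithin_iff] at hev
    obtain ⟨U, hU, hUo, hxU⟩ := eventually_nhds_iff.1 hev
    obtain ⟨n, k, hnk⟩ := exists_add_smul_mem hα y hUo ⟨x, hxU⟩
    have hn : y + (n : ℝ) • α ∈ goodSet α S := by
      simpa using add_smul_mem_goodSet hy (n : ℤ)
    have := hU _ hnk (add_int_mem_goodSet hn k)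
    simp only [p₁, p₂, inv y hy] at this
    exact this
  -- On the good set `h₁` differs from the upper semicontinuous `h₂` by a constant.
  have u₁ : UpperSemicontinuousOn h₁ (goodSet α S) := by
    intro x hx c hc
    filter_upwards [u₂ x hx (c - (h₁ x + -h₂ x)) (by linarith), self_mem_nhdsWithin] with y hy hyG
    have := le y hyG x hx
    linarith
  refine ⟨h₁, ⟨M, fun x hx => ?_⟩, continuousOn_iff_lower_upperSemicontinuousOn.2 ⟨l₁, u₁⟩,
    fun x _ k => p₁ x k, s₁⟩
  rw [abs_le]
  refine ⟨?_, ciSup_le fun q => ?_⟩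
  · refine le_trans ?_ (le_ciSup (bdd x hx).1 0)
    have := abs_le.1 (hb x hx 0)
    linarith
  · have := abs_le.1 (hb x hx q)
    linarith

/-- a Riemann measurable bounded remainder set admits a Riemann integrable
transfer function. -/
theorem stmt9 {d : ℕ} (hd : 1 ≤ d) (α : Fin d → ℝ) (hα : IsIrrationalVector α)
    (S : Set (Fin d → ℝ)) (hS : IsRiemannMeasurable S) (hbrs : IsBRS α S) :
    ∃ g : (Fin d → ℝ) → ℝ, IsTransfer α S g ∧ RiemannIntegrableFn g := by
  obtain ⟨h, ⟨M, hM⟩, hc, hper, hcoh⟩ := exists_transfer_on_goodSet hα hS hbrs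
  have hae := ae_mem_goodSet α hS.2
  have hα' : ∀ x ∈ goodSet α S, x + α ∈ goodSet α S := fun x hx => by
    simpa using add_smul_mem_goodSet hx 1
  -- The equation for `h` is indexed by `x` and `x + α`; shifting by `α` gives the required form.
  obtain ⟨g, hg, hgR, hgh⟩ := exists_riemann_extension (H := fun x => h (x + α)) hae
    (fun x hx k => add_int_mem_goodSet hx k)
    (fun x hx k => by rw [add_right_comm, hper _ (hα' x hx)])
    (fun x hx => hM _ (hα' x hx))
    (hc.comp (f := fun x => x + α) (by fun_prop) hα')
  refine ⟨g, ⟨hg, ?_⟩, hgR⟩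
  filter_upwards [hae] with x hx
  have hx' : x - α ∈ goodSet α S := by
    simpa [sub_eq_add_neg] using add_smul_mem_goodSet hx (-1)
  rw [hgh x hx, hgh _ hx', sub_add_cancel, hcoh x hx]
  ring
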